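/- Let a ∈ 𝔻, f₀ ∈ 𝒮^∞, let c₀, c₁, λ ∈ ℂ with |c₀| = |c₁| = |λ| = 1, let b ∈ 𝔻, and set ρ(z) = λ·(z − b)/(conj(b)·z − 1) for z ∈ 𝔻. Then the map T defined by T(f)(z) = f₀(z) + c₀·conj(f(a)) + ∫_{[a,z]} c₁·conj(f'(conj(ρ(ζ)))) dζ maps 𝒮^∞ into 𝒮^∞ and is a surjective isometry of 𝒮^∞ with respect to the norm ‖·‖_σ. -/

import Mathlib

open Complex Metric Set

/-- `f` belongs to `𝒮^∞`: `f` is analytic on the open unit disc `𝔻` and its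
derivative is bounded on `𝔻`. -/
def MemSInf (f : ℂ → ℂ) : Prop :=
  DifferentiableOn ℂ f (ball (0 : ℂ) 1) ∧
    ∃ M : ℝ, ∀ z ∈ ball (0 : ℂ) 1, ‖deriv f z‖ ≤ M

/-- The norm `‖f‖_σ = |f(a)| + sup_{w ∈ 𝔻} |f'(w)|`. -/
noncomputable def normSigmaA (a : ℂ) (f : ℂ → ℂ) : ℝ :=
  ‖f a‖ + ⨆ w : ball (0 : ℂ) 1, ‖deriv f (w : ℂ)‖

/-- The line integral `∫_{[a,z]} g(ζ) dζ = ∫₀¹ g(a + t(z − a))·(z − a) dt`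
along the straight segment from `a` to `z`. -/
noncomputable def lineInt (g : ℂ → ℂ) (a z : ℂ) : ℂ :=
  ∫ t in (0:ℝ)..1, g (a + (t : ℂ) * (z - a)) * (z - a)

lemma primLine (a : ℂ) (ha : a ∈ ball (0 : ℂ) 1) (G : ℂ → ℂ)
    (hG : DifferentiableOn ℂ G (ball (0 : ℂ) 1)) (z : ℂ) (hz : z ∈ ball (0 : ℂ) 1) :
    HasDerivAt (lineInt G a) (G z) z := by
  obtain ⟨F, hF⟩ := hG.isExactOn_ball
  have key : ∀ w ∈ ball (0 : ℂ) 1, lineInt G a w = F w - F a := by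
    intro w hw
    have hseg : ∀ t ∈ Set.uIcc (0:ℝ) 1, a + (t : ℂ) * (w - a) ∈ ball (0 : ℂ) 1 := by
      intro t ht
      rw [Set.uIcc_of_le zero_le_one] at ht
      have := (convex_ball (0 : ℂ) 1).add_smul_sub_mem ha hw ht
      simpa using this
    have hγ : ∀ t : ℝ, HasDerivAt (fun t : ℝ => a + (t : ℂ) * (w - a)) (w - a) t := by
      intro t
      have := ((Complex.ofRealCLM.hasDerivAt (x := t)).mul_const (w - a)).const_add a
      simpa using this
    have hc : Continuous (fun t : ℝ => a + (t : ℂ) * (w - a)) := by fun_prop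
    have h1 : ∀ t ∈ Set.uIcc (0:ℝ) 1,
        HasDerivAt (fun t : ℝ => F (a + (t : ℂ) * (w - a)))
          (G (a + (t : ℂ) * (w - a)) * (w - a)) t := by
      intro t ht
      exact (hF _ (hseg t ht)).comp t (hγ t)
    have hcont : ContinuousOn (fun t : ℝ => G (a + (t : ℂ) * (w - a)) * (w - a))
        (Set.uIcc (0:ℝ) 1) :=
      (hG.continuousOn.comp hc.continuousOn hseg).mul continuousOn_const
    have := intervalIntegral.integral_eq_sub_of_hasDerivAt h1 hcont.intervalIntegrable
    unfold lineInt
    rw [this]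
    simp
  refine ((hF z hz).sub_const (F a)).congr_of_eventuallyEq ?_
  filter_upwards [isOpen_ball.mem_nhds hz] with w hw using key w hw

lemma lineInt_self (G : ℂ → ℂ) (a : ℂ) : lineInt G a a = 0 := by
  simp [lineInt]

lemma den_ne (b z : ℂ) (hb : b ∈ ball (0 : ℂ) 1) (hz : z ∈ ball (0 : ℂ) 1) :
    (starRingEnd ℂ) b * z - 1 ≠ 0 := by
  rw [mem_ball_zero_iff] at hb hz
  intro h
  have h1 : (starRingEnd ℂ) b * z = 1 := sub_eq_zero.mp h
  have h2 : ‖b‖ * ‖z‖ = 1 := by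
    have := congrArg norm h1
    simpa using this
  nlinarith [norm_nonneg b, norm_nonneg z]

lemma phi_mem (b z : ℂ) (hb : b ∈ ball (0 : ℂ) 1) (hz : z ∈ ball (0 : ℂ) 1) :
    (z - b) / ((starRingEnd ℂ) b * z - 1) ∈ ball (0 : ℂ) 1 := by
  have hd := den_ne b z hb hz
  rw [mem_ball_zero_iff] at hb hz ⊢
  rw [norm_div, div_lt_one (norm_pos_iff.mpr hd)]
  have hb2 : Complex.normSq b < 1 := by
    rw [Complex.normSq_eq_norm_sq]; nlinarith [norm_nonneg b]
  have hz2 : Complex.normSq z < 1 := by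
    rw [Complex.normSq_eq_norm_sq]; nlinarith [norm_nonneg z]
  have : Complex.normSq (z - b) < Complex.normSq ((starRingEnd ℂ) b * z - 1) := by
    have h := mul_pos (sub_pos.mpr hb2) (sub_pos.mpr hz2)
    simp only [Complex.normSq_apply, Complex.sub_re, Complex.sub_im, Complex.mul_re,
      Complex.mul_im, Complex.conj_re, Complex.conj_im, Complex.one_re, Complex.one_im] at h ⊢
    nlinarith
  rw [Complex.normSq_eq_norm_sq, Complex.normSq_eq_norm_sq] at this
  exact lt_of_pow_lt_pow_left₀ 2 (norm_nonneg _) this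

lemma phi_phi (b z : ℂ) (hb : b ∈ ball (0 : ℂ) 1) (hz : z ∈ ball (0 : ℂ) 1) :
    ((z - b) / ((starRingEnd ℂ) b * z - 1) - b) /
      ((starRingEnd ℂ) b * ((z - b) / ((starRingEnd ℂ) b * z - 1)) - 1) = z := by
  have hd := den_ne b z hb hz
  have hd2 := den_ne b _ hb (phi_mem b z hb hz)
  rw [div_eq_iff hd2]
  generalize (starRingEnd ℂ) b = c at hd ⊢
  have hq : (z - b) / (c * z - 1) * (c * z - 1) = z - b := div_mul_cancel₀ _ hd
  linear_combination -hq

lemma conj_mem {z : ℂ} (hz : z ∈ ball (0 : ℂ) 1) : (starRingEnd ℂ) z ∈ ball (0 : ℂ) 1 := by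
  rw [mem_ball_zero_iff] at hz ⊢
  simpa using hz

lemma mul_unit_mem {c z : ℂ} (hc : ‖c‖ = 1) (hz : z ∈ ball (0 : ℂ) 1) :
    c * z ∈ ball (0 : ℂ) 1 := by
  rw [mem_ball_zero_iff] at hz ⊢
  simpa [hc] using hz

/-- `conj ∘ f ∘ conj ∘ r` is holomorphic on the disc. -/
lemma conj_comp_diff {f r : ℂ → ℂ} (hf : DifferentiableOn ℂ f (ball (0 : ℂ) 1))
    (hr : DifferentiableOn ℂ r (ball (0 : ℂ) 1))
    (hm : ∀ z ∈ ball (0 : ℂ) 1, r z ∈ ball (0 : ℂ) 1) :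
    DifferentiableOn ℂ (fun z => (starRingEnd ℂ) (f ((starRingEnd ℂ) (r z))))
      (ball (0 : ℂ) 1) := by
  intro z hz
  have h1 : DifferentiableAt ℂ f ((starRingEnd ℂ) (r z)) :=
    hf.differentiableAt (isOpen_ball.mem_nhds (conj_mem (hm z hz)))
  have h2 := h1.conj_conj
  rw [Complex.conj_conj] at h2
  exact (h2.comp z (hr.differentiableAt (isOpen_ball.mem_nhds hz))).differentiableWithinAt

theorem conj_conj_integral_form_is_surjective_isometry_normSigmaA
    (a : ℂ) (ha : a ∈ ball (0 : ℂ) 1)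
    (f₀ : ℂ → ℂ) (hf₀ : MemSInf f₀)
    (c₀ c₁ lam : ℂ) (hc₀ : ‖c₀‖ = 1) (hc₁ : ‖c₁‖ = 1) (hlam : ‖lam‖ = 1)
    (b : ℂ) (hb : b ∈ ball (0 : ℂ) 1)
    (ρ : ℂ → ℂ) (hρ : ∀ z, ρ z = lam * (z - b) / ((starRingEnd ℂ) b * z - 1))
    (T : (ℂ → ℂ) → (ℂ → ℂ))
    (hT : ∀ f z, T f z = f₀ z + c₀ * (starRingEnd ℂ) (f a) + lineInt (fun ζ => c₁ * (starRingEnd ℂ) (deriv f ((starRingEnd ℂ) (ρ ζ)))) a z) :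
    (∀ f, MemSInf f → MemSInf (T f)) ∧
    (∀ g, MemSInf g → ∃ f, MemSInf f ∧ Set.EqOn (T f) g (ball (0 : ℂ) 1)) ∧
    (∀ f g, MemSInf f → MemSInf g →
      normSigmaA a (T f - T g) = normSigmaA a (f - g)) := by
  have hlam0 : lam ≠ 0 := by rintro rfl; simp at hlam
  have hc₀0 : c₀ ≠ 0 := by rintro rfl; simp at hc₀
  have hc₁0 : c₁ ≠ 0 := by rintro rfl; simp at hc₁
  have hli : ‖lam⁻¹‖ = 1 := by simp [hlam]
  have hderiv : ∀ f, MemSInf f → DifferentiableOn ℂ (deriv f) (ball (0 : ℂ) 1) :=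
    fun f hf => hf.1.deriv isOpen_ball
  have hρm : ∀ z ∈ ball (0 : ℂ) 1, ρ z ∈ ball (0 : ℂ) 1 := by
    intro z hz
    rw [hρ, mul_div_assoc]
    exact mul_unit_mem hlam (phi_mem b z hb hz)
  have hρd : DifferentiableOn ℂ ρ (ball (0 : ℂ) 1) := by
    have : ρ = fun z => lam * (z - b) / ((starRingEnd ℂ) b * z - 1) := funext hρ
    rw [this]
    exact DifferentiableOn.div (by fun_prop) (by fun_prop) (fun z hz => den_ne b z hb hz)
  -- the inverse of `ρ`
  let σ : ℂ → ℂ := fun w => (lam⁻¹ * w - b) / ((starRingEnd ℂ) b * (lam⁻¹ * w) - 1)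
  have hσm : ∀ z ∈ ball (0 : ℂ) 1, σ z ∈ ball (0 : ℂ) 1 := fun z hz =>
    phi_mem b _ hb (mul_unit_mem hli hz)
  have hσd : DifferentiableOn ℂ σ (ball (0 : ℂ) 1) :=
    DifferentiableOn.div (by fun_prop) (by fun_prop)
      (fun z hz => den_ne b _ hb (mul_unit_mem hli hz))
  have hρσ : ∀ w ∈ ball (0 : ℂ) 1, ρ (σ w) = w := by
    intro w hw
    rw [hρ, mul_div_assoc]
    have := phi_phi b _ hb (mul_unit_mem hli hw)
    change lam * (((lam⁻¹ * w - b) / ((starRingEnd ℂ) b * (lam⁻¹ * w) - 1) - b) /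
      ((starRingEnd ℂ) b * ((lam⁻¹ * w - b) / ((starRingEnd ℂ) b * (lam⁻¹ * w) - 1)) - 1)) = w
    rw [this, mul_inv_cancel_left₀ hlam0]
  have hσρ : ∀ z ∈ ball (0 : ℂ) 1, σ (ρ z) = z := by
    intro z hz
    have h1 : lam⁻¹ * ρ z = (z - b) / ((starRingEnd ℂ) b * z - 1) := by
      rw [hρ, mul_div_assoc, inv_mul_cancel_left₀ hlam0]
    change (lam⁻¹ * ρ z - b) / ((starRingEnd ℂ) b * (lam⁻¹ * ρ z) - 1) = z
    rw [h1, phi_phi b z hb hz]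
  have hTd : ∀ f, MemSInf f → ∀ z ∈ ball (0 : ℂ) 1, HasDerivAt (T f)
      (deriv f₀ z + c₁ * (starRingEnd ℂ) (deriv f ((starRingEnd ℂ) (ρ z)))) z := by
    intro f hf z hz
    have h0 : HasDerivAt f₀ (deriv f₀ z) z :=
      (hf₀.1.differentiableAt (isOpen_ball.mem_nhds hz)).hasDerivAt
    have h1 := primLine a ha (fun ζ => c₁ * (starRingEnd ℂ) (deriv f ((starRingEnd ℂ) (ρ ζ))))
      ((conj_comp_diff (hderiv f hf) hρd hρm).const_mul c₁) z hz
    have h2 := (h0.add_const (c₀ * (starRingEnd ℂ) (f a))).add h1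
    have e : T f = (fun z => f₀ z + c₀ * (starRingEnd ℂ) (f a)) +
        lineInt (fun ζ => c₁ * (starRingEnd ℂ) (deriv f ((starRingEnd ℂ) (ρ ζ)))) a :=
      funext (hT f)
    rw [e]
    exact h2
  have hTa : ∀ f, T f a = f₀ a + c₀ * (starRingEnd ℂ) (f a) := by
    intro f
    rw [hT, lineInt_self, add_zero]
  refine ⟨?_, ?_, ?_⟩
  · intro f hf
    refine ⟨fun z hz => (hTd f hf z hz).differentiableAt.differentiableWithinAt, ?_⟩
    obtain ⟨M0, hM0⟩ := hf₀.2
    obtain ⟨M, hM⟩ := hf.2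
    refine ⟨M0 + M, fun z hz => ?_⟩
    rw [(hTd f hf z hz).deriv]
    refine (norm_add_le _ _).trans (add_le_add (hM0 z hz) ?_)
    rw [norm_mul, hc₁, one_mul, RCLike.norm_conj]
    exact hM _ (conj_mem (hρm z hz))
  · intro g hg
    -- construct the preimage as a primitive
    have hK : DifferentiableOn ℂ (fun z => c₁⁻¹ * (deriv g (σ z) - deriv f₀ (σ z)))
        (ball (0 : ℂ) 1) :=
      (((hderiv g hg).comp hσd hσm).sub ((hderiv f₀ hf₀).comp hσd hσm)).const_mul _
    have hH := conj_comp_diff (r := fun z => z) hK differentiableOn_id (fun z hz => hz)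
    obtain ⟨F, hF⟩ := hH.isExactOn_ball
    let f : ℂ → ℂ := fun z => F z + ((starRingEnd ℂ) ((g a - f₀ a) / c₀) - F a)
    have hfd : ∀ z ∈ ball (0 : ℂ) 1, HasDerivAt f ((starRingEnd ℂ)
        (c₁⁻¹ * (deriv g (σ ((starRingEnd ℂ) z)) - deriv f₀ (σ ((starRingEnd ℂ) z))))) z :=
      fun z hz => (hF z hz).add_const _
    have hf : MemSInf f := by
      refine ⟨fun z hz => (hfd z hz).differentiableAt.differentiableWithinAt, ?_⟩
      obtain ⟨M0, hM0⟩ := hf₀.2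
      obtain ⟨M, hM⟩ := hg.2
      refine ⟨M + M0, fun z hz => ?_⟩
      have hm := hσm _ (conj_mem hz)
      rw [(hfd z hz).deriv, RCLike.norm_conj, norm_mul, norm_inv, hc₁, inv_one, one_mul]
      exact (norm_sub_le _ _).trans (add_le_add (hM _ hm) (hM0 _ hm))
    refine ⟨f, hf, ?_⟩
    refine isOpen_ball.eqOn_of_deriv_eq (convex_ball (0 : ℂ) 1).isPreconnected
      (fun z hz => (hTd f hf z hz).differentiableAt.differentiableWithinAt) hg.1 ?_ ha ?_
    · intro z hz
      rw [(hTd f hf z hz).deriv, (hfd _ (conj_mem (hρm z hz))).deriv, Complex.conj_conj,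
        Complex.conj_conj, hσρ z hz, mul_inv_cancel_left₀ hc₁0]
      ring
    · rw [hTa]
      have : f a = (starRingEnd ℂ) ((g a - f₀ a) / c₀) := by simp [f]
      rw [this, Complex.conj_conj, mul_div_cancel₀ _ hc₀0]
      ring
  · intro f g hf hg
    unfold normSigmaA
    congr 1
    · rw [Pi.sub_apply, Pi.sub_apply, hTa, hTa, add_sub_add_left_eq_sub, ← mul_sub, ← map_sub,
        norm_mul, hc₀, one_mul, RCLike.norm_conj]
    · refine Function.Surjective.iSup_congr
        (fun w : ball (0 : ℂ) 1 =>
          (⟨(starRingEnd ℂ) (ρ w), conj_mem (hρm w w.2)⟩ : ball (0 : ℂ) 1)) ?_ ?_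
      · rintro ⟨w, hw⟩
        refine ⟨⟨σ ((starRingEnd ℂ) w), hσm _ (conj_mem hw)⟩, ?_⟩
        apply Subtype.ext
        change (starRingEnd ℂ) (ρ (σ ((starRingEnd ℂ) w))) = w
        rw [hρσ _ (conj_mem hw), Complex.conj_conj]
      · rintro ⟨z, hz⟩
        change ‖deriv (f - g) ((starRingEnd ℂ) (ρ z))‖ = ‖deriv (T f - T g) z‖
        have hn := isOpen_ball.mem_nhds (conj_mem (hρm z hz))
        rw [((hTd f hf z hz).sub (hTd g hg z hz)).deriv,
          deriv_sub (hf.1.differentiableAt hn) (hg.1.differentiableAt hn),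
          add_sub_add_left_eq_sub, ← mul_sub, ← map_sub, norm_mul, hc₁, one_mul,
          RCLike.norm_conj]
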